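/- Let D be a triangulated category with a t-structure 𝒰 = (U^{≤0}, U^{≥0}), let m be a positive integer, and set m-ℋ = U^{≥-(m-1)} ∩ U^{≤0}. Then the assignments φ(𝒯,ℱ) = ℱ[m] * 𝒯 and ψ(ℰ) = (m-ℋ ∩ ℰ, m-ℋ ∩ ℰ[-m]) are mutually inverse, order preserving bijections between the poset of s-torsion pairs in m-ℋ and the poset of m-extended hearts ℰ on D with ℰ ≤ m-ℋ, i.e. ℰ ⊆ m-ℋ[m] * m-ℋ and m-ℋ ⊆ ℰ * ℰ[-m]. -/

import Mathlib

/-!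
The category `D` is only assumed to be pretriangulated, so the octahedral axiom (and with it the
associativity of `*`) is not available. Every t-structure is turned into a Mathlib
`TStructure`, which makes an `m`-extended heart the window `{A | 1 - m ≤ A ≤ 0}`, and the
usual truncation arguments only use that aisles and coaisles are orthogonals of each other.

*From `s`-torsion pairs to hearts.* Let `(T, F)` be an `s`-torsion pair in `H`. The new t-structure
has as aisle the class `tiltAisle` of those `A ∈ U^{≤0}` with `Hom(A, F) = 0`, and as coaisle the
right orthogonal of the aisle. Each `A` in this aisle sits in a triangle `A' → A → X` with
`A' ∈ U^{≤-m}` and `X ∈ T` (`exists_triangle_of_tiltAisle`). For the decomposition of an arbitrary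
object `A`, truncate `B → A → C` and `B' → B → X`, take the torsion triangle `T₀ → X → F₀`,
and let `W` be the fibre of `B → F₀`. In a triangulated category the octahedral axiom would
identify `W` as an extension of `T₀` by `B'` and the cone of `W → A` as an extension of `C` by `F₀`.
Here it suffices that these two objects have the same vanishing of morphisms as the extensions,
which follows from the long exact sequences (`hom_fibre_eq_zero`, `hom_cone_eq_zero`).
The heart of the new t-structure is `F[m] * T` (`exists_tilt`).

*From hearts to `s`-torsion pairs.* If `E ≤ H`, then `E ⊆ U^{≤0}`, `E[-m] ⊆ U^{≥1-m}`,
`H ⊆ V^{≥1-m}` and `H ⊆ V^{≤m}`. So the triangles `A → X → B` that exhibit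
`H ⊆ E * E[-m]` have both ends in `H`, and those that exhibit `E ⊆ H[m] * H`
have both ends in `E`.

*Orders.* If `V₁^{≤0} ⊆ V₂^{≤0}` and `V₂^{≤-m} ⊆ V₁^{≤0}`, then truncating shows that the extended
heart of `V₁` is `≤` that of `V₂` (`extHeartLE_of_le`). This gives both `φ(T, F) ≤ H` and the
monotonicity of `φ`.
-/

open CategoryTheory Category Limits Pretriangulated

universe v u

variable (D : Type u) [Category.{v} D] [Preadditive D] [HasZeroObject D]
  [HasShift D ℤ] [∀ n : ℤ, (shiftFunctor D n).Additive]
  [Pretriangulated D] [HasBinaryBiproducts D]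

/-- `shiftSet D S n` is the full subcategory `S[n]`: objects isomorphic to `X⟦n⟧`
with `X ∈ S`. -/
def shiftSet (S : Set D) (n : ℤ) : Set D :=
  {A | ∃ B ∈ S, Nonempty (A ≅ B⟦n⟧)}

/-- `starSet D X Y` is `X * Y`: the class of objects `A` admitting a distinguished
triangle `X → A → Y → X[1]` with `X ∈ 𝒳` and `Y ∈ 𝒴`. -/
def starSet (X Y : Set D) : Set D :=
  {A | ∃ (B C : D) (f : B ⟶ A) (g : A ⟶ C) (h : C ⟶ B⟦(1 : ℤ)⟧),
    B ∈ X ∧ C ∈ Y ∧ Triangle.mk f g h ∈ distTriang D}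

/-- `Hom(X, Y) = 0`: every morphism from an object of `X` to an object of `Y` is zero. -/
def homZero (X Y : Set D) : Prop :=
  ∀ A ∈ X, ∀ B ∈ Y, ∀ f : A ⟶ B, f = 0

/-- a class of objects closed under isomorphisms -/
def isoClosed (S : Set D) : Prop :=
  ∀ ⦃A B : D⦄, (A ≅ B) → A ∈ S → B ∈ S

/-- an additive full subcategory (closed under isomorphisms) which is closed under
direct summands -/
structure AdditiveClosed (S : Set D) : Prop where
  iso : isoClosed D S
  zero : ∀ Z : D, IsZero Z → Z ∈ S
  sum : ∀ A ∈ S, ∀ B ∈ S, (A ⊞ B) ∈ S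
  summand : ∀ A ∈ S, ∀ (X : D) (i : X ⟶ A) (p : A ⟶ X), i ≫ p = 𝟙 X → X ∈ S

/-- a torsion pair `(U, V)` in the triangulated category `D` -/
structure IsTorsionPair (U V : Set D) : Prop where
  addU : AdditiveClosed D U
  addV : AdditiveClosed D V
  hom_zero : homZero D U V
  cover : ∀ A : D, A ∈ starSet D U V

/-- `t₁ ≼ t₂` for torsion pairs in a triangulated category: `U₁ ⊆ U₂` and `U₁[1] ⊆ U₂`. -/
def torsLE (U₁ U₂ : Set D) : Prop :=
  U₁ ⊆ U₂ ∧ shiftSet D U₁ 1 ⊆ U₂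

/-- a torsion pair `(T, F)` in an (extension-closed) full subcategory `H` of `D`:
`T` and `F` are additive subcategories of `H` closed under direct summands,
`Hom(T, F) = 0`, and every object of `H` admits a distinguished triangle
`T → X → F → T[1]` with `T ∈ 𝒯`, `F ∈ ℱ`. -/
structure IsTorsionPairIn (H T F : Set D) : Prop where
  subT : T ⊆ H
  subF : F ⊆ H
  isoT : ∀ ⦃A B : D⦄, (A ≅ B) → A ∈ T → B ∈ H → B ∈ T
  isoF : ∀ ⦃A B : D⦄, (A ≅ B) → A ∈ F → B ∈ H → B ∈ F
  zeroT : ∀ Z : D, IsZero Z → Z ∈ H → Z ∈ T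
  zeroF : ∀ Z : D, IsZero Z → Z ∈ H → Z ∈ F
  sumT : ∀ A ∈ T, ∀ B ∈ T, (A ⊞ B) ∈ T
  sumF : ∀ A ∈ F, ∀ B ∈ F, (A ⊞ B) ∈ F
  summandT : ∀ A ∈ T, ∀ (X : D) (i : X ⟶ A) (p : A ⟶ X), i ≫ p = 𝟙 X → X ∈ H → X ∈ T
  summandF : ∀ A ∈ F, ∀ (X : D) (i : X ⟶ A) (p : A ⟶ X), i ≫ p = 𝟙 X → X ∈ H → X ∈ F
  hom_zero : homZero D T F
  cover : ∀ A ∈ H, A ∈ starSet D T F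

/-- an `s`-torsion pair in `H`: a torsion pair with moreover `Hom(T, F[-1]) = 0`. -/
structure IsSTorsionPairIn (H T F : Set D) extends IsTorsionPairIn D H T F : Prop where
  neg_hom_zero : ∀ A ∈ T, ∀ B ∈ F, ∀ f : A ⟶ B⟦(-1 : ℤ)⟧, f = 0

/-- the relation `≼` for torsion pairs in a subcategory `H`:
`Hom(T, F') = 0` and `Hom(T, F'[-1]) = 0`. -/
def torsLEIn (T F' : Set D) : Prop :=
  homZero D T F' ∧ homZero D T (shiftSet D F' (-1))

/-- a `t`-structure `(L, G) = (S^{≤0}, S^{≥0})` on a triangulated (full) subcategory `S`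
of `D` (take `S = Set.univ` for a `t`-structure on `D` itself). -/
structure IsTStructureOn (S L G : Set D) : Prop where
  subL : L ⊆ S
  subG : G ⊆ S
  isoL : ∀ ⦃A B : D⦄, (A ≅ B) → A ∈ L → B ∈ S → B ∈ L
  isoG : ∀ ⦃A B : D⦄, (A ≅ B) → A ∈ G → B ∈ S → B ∈ G
  hom_zero : homZero D L (shiftSet D G (-1))
  cover : ∀ A ∈ S, A ∈ starSet D L (shiftSet D G (-1))
  shiftL : L ⊆ shiftSet D L (-1)
  shiftG : shiftSet D G (-1) ⊆ G

/-- a `t`-structure `(L, G) = (D^{≤0}, D^{≥0})` on `D`. -/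
def IsTStructure (L G : Set D) : Prop := IsTStructureOn D Set.univ L G

/-- a triangulated full subcategory of `D`. -/
structure IsTriangulatedSub (S : Set D) : Prop where
  iso : isoClosed D S
  zero : ∀ Z : D, IsZero Z → Z ∈ S
  shift : ∀ (n : ℤ), ∀ A ∈ S, A⟦n⟧ ∈ S
  ext₂ : ∀ (T : Triangle D), (T ∈ distTriang D) → T.obj₁ ∈ S → T.obj₃ ∈ S → T.obj₂ ∈ S

/-- an `m`-extended heart on `D`: a full subcategory of the form
`V^{≥ -(m-1)} ∩ V^{≤ 0}` for some `t`-structure `(V^{≤0}, V^{≥0})` on `D`. -/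
def IsExtendedHeart (m : ℤ) (E : Set D) : Prop :=
  ∃ L G : Set D, IsTStructure D L G ∧ E = shiftSet D G (m - 1) ∩ L

/-- the relation `E₁ ≤ E₂` for `m`-extended hearts:
`E₁ ⊆ E₂[m] * E₂` and `E₂ ⊆ E₁ * E₁[-m]`. -/
def extHeartLE (m : ℤ) (E₁ E₂ : Set D) : Prop :=
  E₁ ⊆ starSet D (shiftSet D E₂ m) E₂ ∧ E₂ ⊆ starSet D E₁ (shiftSet D E₁ (-m))

namespace ExtHeart

open Triangulated ZeroObject

section

set_option linter.unusedSectionVars false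

variable {D}

/-! ### Exactness in terms of the morphisms of a triangle -/

section Exact

variable {A B C Z : D} {f : A ⟶ B} {g : B ⟶ C} {h : C ⟶ A⟦(1 : ℤ)⟧}

lemma hom_exact₁ (hT : Triangle.mk f g h ∈ distTriang D) (u : A⟦(1 : ℤ)⟧ ⟶ Z) (hu : h ≫ u = 0) :
    ∃ v : B⟦(1 : ℤ)⟧ ⟶ Z, u = (-f⟦(1 : ℤ)⟧') ≫ v :=
  Triangle.yoneda_exact₃ _ (rot_of_distTriang _ hT) u hu

lemma hom_exact₂ (hT : Triangle.mk f g h ∈ distTriang D) (u : B ⟶ Z) (hu : f ≫ u = 0) :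
    ∃ v : C ⟶ Z, u = g ≫ v :=
  Triangle.yoneda_exact₂ _ hT u hu

lemma hom_exact₃ (hT : Triangle.mk f g h ∈ distTriang D) (u : C ⟶ Z) (hu : g ≫ u = 0) :
    ∃ v : A⟦(1 : ℤ)⟧ ⟶ Z, u = h ≫ v :=
  Triangle.yoneda_exact₃ _ hT u hu

lemma cohom_exact₁ (hT : Triangle.mk f g h ∈ distTriang D) (u : Z ⟶ A⟦(1 : ℤ)⟧)
    (hu : u ≫ f⟦(1 : ℤ)⟧' = 0) : ∃ v : Z ⟶ C, u = v ≫ h :=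
  Triangle.coyoneda_exact₁ _ hT u hu

lemma cohom_exact₂ (hT : Triangle.mk f g h ∈ distTriang D) (u : Z ⟶ B) (hu : u ≫ g = 0) :
    ∃ v : Z ⟶ A, u = v ≫ f :=
  Triangle.coyoneda_exact₂ _ hT u hu

lemma cohom_exact₃ (hT : Triangle.mk f g h ∈ distTriang D) (u : Z ⟶ C) (hu : u ≫ h = 0) :
    ∃ v : Z ⟶ B, u = v ≫ g :=
  Triangle.coyoneda_exact₃ _ hT u hu

end Exact

/-! ### Windows of a t-structure -/

/-- The window `D^{≥a} ∩ D^{≤b}` of a t-structure, as a set of objects. The `m`-extended heart is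
`win t (1 - m) 0`. -/
def win (t : TStructure D) (a b : ℤ) : Set D := {A | t.IsGE A a ∧ t.IsLE A b}

lemma mem_shiftSet_iff {S : Set D} (hS : isoClosed D S) (k : ℤ) (A : D) :
    A ∈ shiftSet D S k ↔ A⟦-k⟧ ∈ S := by
  constructor
  · rintro ⟨B, hB, ⟨e⟩⟩
    exact hS (((shiftFunctor D (-k)).mapIso e ≪≫ (shiftEquiv D k).unitIso.symm.app B).symm) hB
  · intro h
    exact ⟨_, h, ⟨((shiftEquiv D k).counitIso.app A).symm⟩⟩

lemma isoClosed_win (t : TStructure D) (a b : ℤ) : isoClosed D (win t a b) := by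
  rintro A B e ⟨h₁, h₂⟩
  exact ⟨t.isGE_of_iso e a, t.isLE_of_iso e b⟩

lemma shiftSet_win (t : TStructure D) (a b k : ℤ) :
    shiftSet D (win t a b) k = win t (a - k) (b - k) := by
  ext A
  rw [mem_shiftSet_iff (isoClosed_win t a b)]
  exact and_congr (t.isGE_shift_iff A (a - k) (-k) a (by lia))
    (t.isLE_shift_iff A (b - k) (-k) b (by lia))

lemma isLE_of_retract (t : TStructure D) {A X : D} (n : ℤ) (hA : t.IsLE A n) (i : X ⟶ A)
    (p : A ⟶ X) (h : i ≫ p = 𝟙 X) : t.IsLE X n := by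
  rw [t.isLE_iff_orthogonal n (n + 1) rfl]
  intro Y f _
  rw [← id_comp f, ← h, assoc, t.zero (p ≫ f) n (n + 1), comp_zero]

lemma isGE_of_retract (t : TStructure D) {A X : D} (n : ℤ) (hA : t.IsGE A n) (i : X ⟶ A)
    (p : A ⟶ X) (h : i ≫ p = 𝟙 X) : t.IsGE X n := by
  rw [t.isGE_iff_orthogonal (n - 1) n (by lia)]
  intro Y f _
  rw [← comp_id f, ← h, ← assoc, t.zero (f ≫ i) (n - 1) n, zero_comp]

lemma win_summand (t : TStructure D) (a b : ℤ) {A X : D} (hA : A ∈ win t a b) (i : X ⟶ A)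
    (p : A ⟶ X) (h : i ≫ p = 𝟙 X) : X ∈ win t a b :=
  ⟨isGE_of_retract t a hA.1 i p h, isLE_of_retract t b hA.2 i p h⟩

lemma win_ext (t : TStructure D) (a b : ℤ) {A B C : D} {f : A ⟶ B} {g : B ⟶ C}
    {h : C ⟶ A⟦(1 : ℤ)⟧} (hT : Triangle.mk f g h ∈ distTriang D)
    (hA : A ∈ win t a b) (hC : C ∈ win t a b) : B ∈ win t a b :=
  ⟨t.isGE₂ _ hT a hA.1 hC.1, t.isLE₂ _ hT b hA.2 hC.2⟩

lemma win_zero (t : TStructure D) (a b : ℤ) (Z : D) (hZ : IsZero Z) : Z ∈ win t a b :=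
  ⟨t.isGE_of_isZero hZ a, t.isLE_of_isZero hZ b⟩

lemma win_sum (t : TStructure D) (a b : ℤ) {A B : D} (hA : A ∈ win t a b) (hB : B ∈ win t a b) :
    (A ⊞ B) ∈ win t a b :=
  win_ext t a b (binaryBiproductTriangle_distinguished A B) hA hB

/-- The cone of a map from `D^{≤n+1}` to `D^{≤n}` lies in `D^{≤n}`. -/
lemma isLE_cone (t : TStructure D) (n : ℤ) {A B C : D} {f : A ⟶ B} {g : B ⟶ C}
    {h : C ⟶ A⟦(1 : ℤ)⟧} (hT : Triangle.mk f g h ∈ distTriang D)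
    (hA : t.IsLE A (n + 1)) (hB : t.IsLE B n) : t.IsLE C n :=
  t.isLE₂ _ (rot_of_distTriang _ hT) n hB (t.isLE_shift A (n + 1) 1 n)

/-- The fibre of a map from `D^{≥n}` to `D^{≥n-1}` lies in `D^{≥n}`. -/
lemma isGE_fibre (t : TStructure D) (n : ℤ) {A B C : D} {f : A ⟶ B} {g : B ⟶ C}
    {h : C ⟶ A⟦(1 : ℤ)⟧} (hT : Triangle.mk f g h ∈ distTriang D)
    (hB : t.IsGE B n) (hC : t.IsGE C (n - 1)) : t.IsGE A n :=
  t.isGE₂ _ (inv_rot_of_distTriang _ hT) n (t.isGE_shift C (n - 1) (-1) n) hB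

lemma retract_of_mor₂_eq_zero {A B C : D} {f : A ⟶ B} {g : B ⟶ C}
    {h : C ⟶ A⟦(1 : ℤ)⟧} (hT : Triangle.mk f g h ∈ distTriang D) (hg : g = 0) :
    ∃ i : B ⟶ A, i ≫ f = 𝟙 B := by
  obtain ⟨i, hi⟩ := cohom_exact₂ hT (𝟙 B) (by rw [hg, comp_zero])
  exact ⟨i, hi.symm⟩

lemma retract_of_mor₁_eq_zero {A B C : D} {f : A ⟶ B} {g : B ⟶ C}
    {h : C ⟶ A⟦(1 : ℤ)⟧} (hT : Triangle.mk f g h ∈ distTriang D) (hf : f = 0) :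
    ∃ p : C ⟶ B, g ≫ p = 𝟙 B := by
  obtain ⟨p, hp⟩ := hom_exact₂ hT (𝟙 B) (by rw [hf, zero_comp])
  exact ⟨p, hp.symm⟩

/-! ### Comparison with Mathlib's t-structures -/

/-- The Mathlib t-structure with aisle `P = D^{≤0}` and coaisle `Q = D^{≥1}`. -/
def mkT (P Q : Set D) (hP : isoClosed D P) (hQ : isoClosed D Q)
    (hom : ∀ A ∈ P, ∀ B ∈ Q, ∀ f : A ⟶ B, f = 0)
    (sP : ∀ A ∈ P, A⟦(1 : ℤ)⟧ ∈ P) (sQ : ∀ A ∈ Q, A⟦(-1 : ℤ)⟧ ∈ Q)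
    (cover : ∀ A : D, A ∈ starSet D P Q) : TStructure D where
  le n := fun X => X⟦n⟧ ∈ P
  ge n := fun X => X⟦n - 1⟧ ∈ Q
  le_isClosedUnderIsomorphisms n := ⟨fun e h => hP ((shiftFunctor D n).mapIso e) h⟩
  ge_isClosedUnderIsomorphisms n := ⟨fun e h => hQ ((shiftFunctor D (n - 1)).mapIso e) h⟩
  le_shift n a n' h X hX := hP ((shiftFunctorAdd' D a n' n h).app X) hX
  ge_shift n a n' h X hX :=
    hQ ((shiftFunctorAdd' D a (n' - 1) (n - 1) (by lia)).app X) hX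
  zero' X Y f hX hY := hom X (hP ((shiftFunctorZero D ℤ).app X) hX) Y
    (hQ ((shiftFunctorZero' D (1 - 1 : ℤ) (by simp)).app Y) hY) f
  le_zero_le X hX := sP X (hP ((shiftFunctorZero D ℤ).app X) hX)
  ge_one_le X hX := by
    have := sQ X (hQ ((shiftFunctorZero' D (1 - 1 : ℤ) (by simp)).app X) hX)
    simpa using this
  exists_triangle_zero_one A := by
    obtain ⟨X, Y, f, g, h, hX, hY, hT⟩ := cover A
    exact ⟨X, Y, hP ((shiftFunctorZero D ℤ).app X).symm hX,
      hQ ((shiftFunctorZero' D (1 - 1 : ℤ) (by simp)).app Y).symm hY, f, g, h, hT⟩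

lemma mkT_isLE {P Q : Set D} {hP hQ hom sP sQ cover} (A : D) (n : ℤ) :
    (mkT P Q hP hQ hom sP sQ cover).IsLE A n ↔ A⟦n⟧ ∈ P :=
  ((mkT P Q hP hQ hom sP sQ cover).le_iff_isLE A n).symm

lemma mkT_isGE {P Q : Set D} {hP hQ hom sP sQ cover} (A : D) (n : ℤ) :
    (mkT P Q hP hQ hom sP sQ cover).IsGE A n ↔ A⟦n - 1⟧ ∈ Q :=
  ((mkT P Q hP hQ hom sP sQ cover).ge_iff_isGE A n).symm

lemma shift_zero_mem_iff {P : Set D} (hP : isoClosed D P) (A : D) :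
    A⟦(0 : ℤ)⟧ ∈ P ↔ A ∈ P :=
  ⟨fun h => hP ((shiftFunctorZero D ℤ).app A) h,
    fun h => hP ((shiftFunctorZero D ℤ).app A).symm h⟩

lemma isoClosed_shiftSet (S : Set D) (k : ℤ) : isoClosed D (shiftSet D S k) := by
  rintro A B e ⟨C, hC, ⟨e'⟩⟩
  exact ⟨C, hC, ⟨e.symm ≪≫ e'⟩⟩

lemma exists_win_eq {L G : Set D} (h : IsTStructure D L G) :
    ∃ t : TStructure D, ∀ m : ℤ, shiftSet D G (m - 1) ∩ L = win t (1 - m) 0 := by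
  have hL : isoClosed D L := fun A B e hA => h.isoL e hA trivial
  have hG : isoClosed D G := fun A B e hA => h.isoG e hA trivial
  refine ⟨mkT L (shiftSet D G (-1)) hL (isoClosed_shiftSet G (-1)) h.hom_zero ?_ ?_
    (fun A => h.cover A trivial), ?_⟩
  · intro A hA
    simpa using (mem_shiftSet_iff hL (-1) A).1 (h.shiftL hA)
  · intro A hA
    exact ⟨A, h.shiftG hA, ⟨Iso.refl _⟩⟩
  · intro m
    ext A
    rw [Set.inter_comm]
    refine and_comm.trans (and_congr (Iff.trans ?_ (mkT_isGE A (1 - m)).symm)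
      (Iff.trans (shift_zero_mem_iff hL A).symm (mkT_isLE A 0).symm))
    rw [mem_shiftSet_iff hG, mem_shiftSet_iff hG]
    have e := (shiftFunctorAdd' D (1 - m - 1) (- -1) (-(m - 1)) (by lia)).app A
    exact ⟨fun h => hG e h, fun h => hG e.symm h⟩

lemma isTStructure_of_tStructure (t : TStructure D) :
    IsTStructure D {A | t.IsLE A 0} {A | t.IsGE A 0} := by
  have hG : isoClosed D {A | t.IsGE A 0} := fun A B e (hA : t.IsGE A 0) => t.isGE_of_iso e 0
  have hL : isoClosed D {A | t.IsLE A 0} := fun A B e (hA : t.IsLE A 0) => t.isLE_of_iso e 0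
  have h1 : ∀ A, A ∈ shiftSet D {A | t.IsGE A 0} (-1) ↔ t.IsGE A 1 := fun A => by
    rw [mem_shiftSet_iff hG]
    exact t.isGE_shift_iff A 1 _ 0
  refine ⟨Set.subset_univ _, Set.subset_univ _, fun A B e hA _ => hL e hA,
    fun A B e hA _ => hG e hA, ?_, ?_, ?_, ?_⟩
  · intro A (hA : t.IsLE A 0) B hB f
    have := (h1 B).1 hB
    exact t.zero f 0 1
  · intro A _
    obtain ⟨X, Y, hX, hY, f, g, h, hT⟩ := t.exists_triangle_zero_one A
    exact ⟨X, Y, f, g, h, ⟨hX⟩, (h1 Y).2 ⟨hY⟩, hT⟩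
  · intro A (hA : t.IsLE A 0)
    rw [mem_shiftSet_iff hL]
    have := t.isLE_of_le A 0 1
    exact t.isLE_shift A 1 _ 0
  · intro A hA
    have := (h1 A).1 hA
    exact t.isGE_of_ge A 0 1

lemma isExtendedHeart_win (t : TStructure D) (m : ℤ) : IsExtendedHeart D m (win t (1 - m) 0) := by
  have hG : isoClosed D {A | t.IsGE A 0} := fun A B e (hA : t.IsGE A 0) => t.isGE_of_iso e 0
  refine ⟨_, _, isTStructure_of_tStructure t, ?_⟩
  ext A
  refine and_congr ?_ Iff.rfl
  rw [mem_shiftSet_iff hG]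
  exact (t.isGE_shift_iff A (1 - m) _ 0).symm

/-! ### Comparison of two t-structures -/

lemma isLE_transfer {t t' : TStructure D} {a b : ℤ} (h : ∀ A, t.IsLE A a → t'.IsLE A b)
    (p q : ℤ) (hpq : p - q = a - b) (A : D) (hA : t.IsLE A p) : t'.IsLE A q := by
  rw [← t'.isLE_shift_iff A q (q - b) b]
  exact h _ (t.isLE_shift A p (q - b) a)

/-- An inclusion of aisles reverses to an inclusion of coaisles. -/
lemma isGE_transfer {t t' : TStructure D} {a b : ℤ} (h : ∀ A, t.IsLE A a → t'.IsLE A b)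
    (p q : ℤ) (hpq : p - q = a - b) (A : D) (hA : t'.IsGE A q) : t.IsGE A p := by
  rw [t.isGE_iff_orthogonal (p - 1) p (by lia)]
  intro Y f hY
  have := isLE_transfer h (p - 1) (q - 1) (by lia) Y hY
  exact t'.zero f (q - 1) q

/-- If `V₁^{≤0} ⊆ V₂^{≤0}` and `V₂^{≤-m} ⊆ V₁^{≤0}`, then truncation for `V₂` at `-m` and truncation
for `V₁` at `0` exhibit the relation `≤` between the extended hearts. -/
lemma extHeartLE_of_le (t₁ t₂ : TStructure D) (m : ℤ) (hm : 1 ≤ m)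
    (h₁₂ : ∀ A, t₁.IsLE A 0 → t₂.IsLE A 0) (h₂₁ : ∀ A, t₂.IsLE A (-m) → t₁.IsLE A 0) :
    extHeartLE D m (win t₁ (1 - m) 0) (win t₂ (1 - m) 0) := by
  constructor
  · rintro A ⟨hg, hl⟩
    obtain ⟨A', X, hA', hX, f, g, h, hT⟩ := t₂.exists_triangle A (-m) (1 - m) (by lia)
    replace hA' : t₂.IsLE A' (-m) := ⟨hA'⟩
    replace hX : t₂.IsGE X (1 - m) := ⟨hX⟩
    refine ⟨A', X, f, g, h, ?_, ⟨hX, ?_⟩, hT⟩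
    · rw [shiftSet_win]
      refine ⟨?_, by simpa using hA'⟩
      refine isGE_fibre t₂ _ hT (isGE_transfer h₂₁ _ (1 - m) (by lia) A hg) ?_
      exact t₂.isGE_of_ge X _ (1 - m)
    · exact isLE_cone t₂ 0 hT (t₂.isLE_of_le A' (-m) _) (h₁₂ A hl)
  · rintro B ⟨hg, hl⟩
    obtain ⟨B', C, hB', hC, f, g, h, hT⟩ := t₁.exists_triangle B 0 1 (by lia)
    replace hB' : t₁.IsLE B' 0 := ⟨hB'⟩
    replace hC : t₁.IsGE C 1 := ⟨hC⟩
    refine ⟨B', C, f, g, h, ⟨?_, hB'⟩, ?_, hT⟩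
    · exact isGE_fibre t₁ _ hT (isGE_transfer h₁₂ (1 - m) (1 - m) (by lia) B hg)
        (t₁.isGE_of_ge C _ 1)
    · rw [shiftSet_win]
      refine ⟨by simpa using hC, ?_⟩
      exact isLE_cone t₁ _ hT (t₁.isLE_of_le B' 0 _)
        (isLE_transfer h₂₁ 0 (0 - -m) (by lia) B hl)

/-! ### Substitutes for the octahedral axiom -/

lemma eq_zero_of_shift_one {A Z : D} (h : ∀ f : A ⟶ Z, f = 0)
    (f : A⟦(1 : ℤ)⟧ ⟶ Z⟦(1 : ℤ)⟧) : f = 0 := by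
  obtain ⟨g, rfl⟩ := (shiftFunctor D (1 : ℤ)).map_surjective f
  rw [h g, Functor.map_zero]

/-- The fibre `W` of a composite `B → X → F₀` has no morphisms to `Z` as soon as the fibres of
`B → X` and `X → F₀` have none. -/
lemma hom_fibre_eq_zero {B' B X T₀ F₀ W : D} {f : B' ⟶ B} {p : B ⟶ X} {h₁ : X ⟶ B'⟦(1 : ℤ)⟧}
    {a : T₀ ⟶ X} {b : X ⟶ F₀} {h₂ : F₀ ⟶ T₀⟦(1 : ℤ)⟧}
    {i : W ⟶ B} {δ : F₀ ⟶ W⟦(1 : ℤ)⟧}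
    (hT₁ : Triangle.mk f p h₁ ∈ distTriang D) (hT₂ : Triangle.mk a b h₂ ∈ distTriang D)
    (hT₃ : Triangle.mk i (p ≫ b) δ ∈ distTriang D) {Z : D}
    (hB' : ∀ u : B' ⟶ Z, u = 0) (hT₀ : ∀ u : T₀ ⟶ Z, u = 0) (φ : W ⟶ Z) : φ = 0 := by
  have h23 : (p ≫ b) ≫ δ = 0 := comp_distTriang_mor_zero₂₃ _ hT₃
  have h12 : i ≫ p ≫ b = 0 := comp_distTriang_mor_zero₁₂ _ hT₃
  have hψ : δ ≫ φ⟦(1 : ℤ)⟧' = 0 := by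
    have hb : b ≫ δ ≫ φ⟦(1 : ℤ)⟧' = 0 := by
      obtain ⟨k, hk⟩ := hom_exact₃ hT₁ (b ≫ δ ≫ φ⟦(1 : ℤ)⟧')
        (by rw [← assoc, ← assoc, h23, zero_comp])
      rw [hk, eq_zero_of_shift_one hB' k, comp_zero]
    obtain ⟨k, hk⟩ := hom_exact₃ hT₂ (δ ≫ φ⟦(1 : ℤ)⟧') hb
    rw [hk, eq_zero_of_shift_one hT₀ k, comp_zero]
  obtain ⟨g, hg⟩ := hom_exact₁ hT₃ (φ⟦(1 : ℤ)⟧') hψ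
  obtain ⟨χ, rfl⟩ := (shiftFunctor D (1 : ℤ)).map_surjective g
  have hφ : φ = -(i ≫ χ) := by
    apply (shiftFunctor D (1 : ℤ)).map_injective
    rw [hg]
    simp
  obtain ⟨χ', hχ'⟩ := hom_exact₂ hT₁ χ (hB' _)
  obtain ⟨χ'', hχ''⟩ := hom_exact₂ hT₂ χ' (hT₀ _)
  rw [hφ, hχ', hχ'', neg_eq_zero, ← assoc p, ← assoc i, h12, zero_comp]

/-- The cone `Y` of a composite `W → B → A` receives no morphisms from `Z` as soon as the cones of
`W → B` and `B → A` receive none. -/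
lemma hom_cone_eq_zero {W B F₀ A C Y : D} {i : W ⟶ B} {q : B ⟶ F₀} {δ : F₀ ⟶ W⟦(1 : ℤ)⟧}
    {j : B ⟶ A} {c : A ⟶ C} {h₂ : C ⟶ B⟦(1 : ℤ)⟧}
    {g : A ⟶ Y} {d : Y ⟶ W⟦(1 : ℤ)⟧}
    (hT₁ : Triangle.mk i q δ ∈ distTriang D) (hT₂ : Triangle.mk j c h₂ ∈ distTriang D)
    (hT₃ : Triangle.mk (i ≫ j) g d ∈ distTriang D) {Z : D}
    (hF₀ : ∀ u : Z ⟶ F₀, u = 0) (hC : ∀ u : Z ⟶ C, u = 0) (φ : Z ⟶ Y) : φ = 0 := by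
  have h31 : d ≫ (i ≫ j)⟦(1 : ℤ)⟧' = 0 := comp_distTriang_mor_zero₃₁ _ hT₃
  have h12 : (i ≫ j) ≫ g = 0 := comp_distTriang_mor_zero₁₂ _ hT₃
  have hψ : φ ≫ d = 0 := by
    have hi : (φ ≫ d) ≫ i⟦(1 : ℤ)⟧' = 0 := by
      obtain ⟨k, hk⟩ := cohom_exact₁ hT₂ ((φ ≫ d) ≫ i⟦(1 : ℤ)⟧')
        (by rw [assoc, assoc, ← Functor.map_comp, h31, comp_zero])
      rw [hk, hC k, zero_comp]
    obtain ⟨k, hk⟩ := cohom_exact₁ hT₁ (φ ≫ d) hi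
    rw [hk, hF₀ k, zero_comp]
  obtain ⟨χ, hχ⟩ := cohom_exact₃ hT₃ φ hψ
  obtain ⟨χ', hχ'⟩ := cohom_exact₂ hT₂ χ (hC _)
  obtain ⟨χ'', hχ''⟩ := cohom_exact₂ hT₁ χ' (hF₀ _)
  rw [hχ, hχ', hχ'', assoc, assoc, ← assoc i, h12, comp_zero]

/-! ### Tilting a t-structure at an `s`-torsion pair -/

/-- The aisle of the tilted t-structure: the objects of `U^{≤0}` without morphisms to `F`. -/
def tiltAisle (t : TStructure D) (F : Set D) : Set D :=
  {A | t.IsLE A 0 ∧ ∀ B ∈ F, ∀ f : A ⟶ B, f = 0}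

/-- The right orthogonal of the aisle of the tilted t-structure. -/
def tiltCoaisle (t : TStructure D) (F : Set D) : Set D :=
  {Y | ∀ A ∈ tiltAisle t F, ∀ f : A ⟶ Y, f = 0}

/-- The tilted aisle is contained in `U^{≤-m} * T`. -/
lemma exists_triangle_of_tiltAisle (t : TStructure D) (m : ℤ) (hm : 1 ≤ m) {T F : Set D}
    (hTF : IsSTorsionPairIn D (win t (1 - m) 0) T F) {A : D} (hA : A ∈ tiltAisle t F) :
    ∃ (A' X : D) (f : A' ⟶ A) (g : A ⟶ X) (h : X ⟶ A'⟦(1 : ℤ)⟧),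
      t.IsLE A' (-m) ∧ X ∈ T ∧ Triangle.mk f g h ∈ distTriang D := by
  obtain ⟨A', X, hA', hX, f, g, h, hT⟩ := t.exists_triangle A (-m) (1 - m) (by lia)
  replace hA' : t.IsLE A' (-m) := ⟨hA'⟩
  replace hX : t.IsGE X (1 - m) := ⟨hX⟩
  have hXH : X ∈ win t (1 - m) 0 :=
    ⟨hX, isLE_cone t 0 hT (t.isLE_of_le A' (-m) _) hA.1⟩
  obtain ⟨T₀, F₀, a, b, c, hT₀, hF₀, hT'⟩ := hTF.cover X hXH
  have hb : b = 0 := by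
    obtain ⟨k, hk⟩ := hom_exact₃ hT b (hA.2 F₀ hF₀ _)
    have := (hTF.subF hF₀).1
    have : t.IsLE (A'⟦(1 : ℤ)⟧) (-m - 1) := t.isLE_shift A' (-m) 1 _
    rw [hk, t.zero (X := A'⟦(1 : ℤ)⟧) k (-m - 1) (1 - m), comp_zero]
  obtain ⟨i, hi⟩ := retract_of_mor₂_eq_zero hT' hb
  exact ⟨A', X, f, g, h, hA', hTF.summandT T₀ hT₀ X i a hi hXH, hT⟩

lemma mem_tiltAisle_of_isLE (t : TStructure D) (m : ℤ) (hm : 1 ≤ m) {T F : Set D}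
    (hTF : IsSTorsionPairIn D (win t (1 - m) 0) T F) {A : D} (hA : t.IsLE A (-m)) :
    A ∈ tiltAisle t F :=
  ⟨t.isLE_of_le A (-m) 0, fun B hB f => by
    have := (hTF.subF hB).1
    exact t.zero f (-m) (1 - m)⟩

lemma tiltAisle_shift (t : TStructure D) (m : ℤ) (hm : 1 ≤ m) {T F : Set D}
    (hTF : IsSTorsionPairIn D (win t (1 - m) 0) T F) {A : D} (hA : A ∈ tiltAisle t F) :
    A⟦(1 : ℤ)⟧ ∈ tiltAisle t F := by
  have h0 := hA.1
  have h1 : t.IsLE (A⟦(1 : ℤ)⟧) (-1) := t.isLE_shift A 0 1 _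
  refine ⟨t.isLE_of_le _ (-1) 0, fun B hB f => ?_⟩
  obtain ⟨A', X, a, b, c, hA', hX, hT⟩ := exists_triangle_of_tiltAisle t m hm hTF hA
  have hBg := (hTF.subF hB).1
  -- Up to the isomorphism `B ≅ B[-1][1]`, the morphism `f` is the shift of some `A ⟶ B[-1]`,
  -- which factors through `X ∈ T`.
  let e : B⟦(-1 : ℤ)⟧⟦(1 : ℤ)⟧ ≅ B := (shiftEquiv D (1 : ℤ)).counitIso.app B
  have key : ∀ u : A ⟶ B⟦(-1 : ℤ)⟧, u = 0 := by
    intro u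
    have : t.IsGE (B⟦(-1 : ℤ)⟧) (2 - m) := t.isGE_shift B (1 - m) (-1) _
    obtain ⟨k, hk⟩ := hom_exact₂ hT u (t.zero (X := A') _ (-m) (2 - m))
    rw [hk, hTF.neg_hom_zero X hX B hB k, comp_zero]
  rw [← cancel_mono e.inv, eq_zero_of_shift_one key (f ≫ e.inv), zero_comp]

lemma tilt_cover (t : TStructure D) (m : ℤ) (hm : 1 ≤ m) {T F : Set D}
    (hTF : IsSTorsionPairIn D (win t (1 - m) 0) T F) (A : D) :
    A ∈ starSet D (tiltAisle t F) (tiltCoaisle t F) := by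
  obtain ⟨B, C, hB, hC, j, c, h₀, hT₀⟩ := t.exists_triangle A 0 1 (by lia)
  replace hB : t.IsLE B 0 := ⟨hB⟩
  replace hC : t.IsGE C 1 := ⟨hC⟩
  obtain ⟨B', X, hB', hX, f, p, h₁, hT₁⟩ := t.exists_triangle B (-m) (1 - m) (by lia)
  replace hB' : t.IsLE B' (-m) := ⟨hB'⟩
  replace hX : t.IsGE X (1 - m) := ⟨hX⟩
  have hXH : X ∈ win t (1 - m) 0 :=
    ⟨hX, isLE_cone t 0 hT₁ (t.isLE_of_le B' (-m) _) hB⟩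
  obtain ⟨T₀, F₀, a, b, h₂, hT₀T, hF₀, hT₂⟩ := hTF.cover X hXH
  obtain ⟨W, i, δ, hT₃⟩ := distinguished_cocone_triangle₁ (p ≫ b)
  obtain ⟨Y, g, d, hT₄⟩ := distinguished_cocone_triangle (i ≫ j)
  refine ⟨W, Y, i ≫ j, g, d, ⟨?_, ?_⟩, ?_, hT₄⟩
  · rw [t.isLE_iff_orthogonal 0 1 rfl]
    intro Z φ hZ
    have := (hTF.subT hT₀T).2
    exact hom_fibre_eq_zero hT₁ hT₂ hT₃ (fun u => t.zero u (-m) 1) (fun u => t.zero u 0 1) φ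
  · intro Z hZ φ
    have := (hTF.subF hZ).1
    exact hom_fibre_eq_zero hT₁ hT₂ hT₃ (fun u => t.zero u (-m) (1 - m))
      (hTF.hom_zero T₀ hT₀T Z hZ) φ
  · intro Z hZ φ
    have := hZ.1
    exact hom_cone_eq_zero hT₃ hT₀ hT₄ (hZ.2 F₀ hF₀) (fun u => t.zero u 0 1) φ

/-- The tilted t-structure: its aisle is `tiltAisle t F`, and its `m`-extended heart is
`F[m] * T`. -/
lemma exists_tilt (t : TStructure D) (m : ℤ) (hm : 1 ≤ m) {T F : Set D}
    (hTF : IsSTorsionPairIn D (win t (1 - m) 0) T F) :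
    ∃ v : TStructure D, (∀ A, v.IsLE A 0 ↔ A ∈ tiltAisle t F) ∧
      starSet D (shiftSet D F m) T = win v (1 - m) 0 := by
  have hP : isoClosed D (tiltAisle t F) := by
    rintro A B e ⟨h₁, h₂⟩
    refine ⟨t.isLE_of_iso e 0, fun C hC f => ?_⟩
    rw [← cancel_epi e.hom, h₂ C hC (e.hom ≫ f), comp_zero]
  have hQ : isoClosed D (tiltCoaisle t F) := by
    intro A B e h C hC f
    rw [← cancel_mono e.inv, h C hC (f ≫ e.inv), zero_comp]
  obtain ⟨v, hv⟩ : ∃ v : TStructure D, ∀ A, v.IsLE A 0 ↔ A ∈ tiltAisle t F := by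
    refine ⟨mkT (tiltAisle t F) (tiltCoaisle t F) hP hQ (fun A hA B hB f => hB A hA f)
      (fun A hA => tiltAisle_shift t m hm hTF hA) ?_ (tilt_cover t m hm hTF), fun A => ?_⟩
    · intro Y hY A hA f
      apply (shiftFunctor D (1 : ℤ)).map_injective
      let e : Y⟦(-1 : ℤ)⟧⟦(1 : ℤ)⟧ ≅ Y := (shiftEquiv D (1 : ℤ)).counitIso.app Y
      rw [Functor.map_zero, ← cancel_mono e.hom,
        hY _ (tiltAisle_shift t m hm hTF hA) (f⟦(1 : ℤ)⟧' ≫ e.hom), zero_comp]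
    · exact (mkT_isLE A 0).trans (shift_zero_mem_iff hP A)
  refine ⟨v, hv, ?_⟩
  have hvt : ∀ A, v.IsLE A 0 → t.IsLE A 0 := fun A hA => ((hv A).1 hA).1
  have htv : ∀ A, t.IsLE A (-m) → v.IsLE A 0 := fun A hA =>
    (hv A).2 (mem_tiltAisle_of_isLE t m hm hTF hA)
  have hT : T ⊆ win v (1 - m) 0 := fun X hX =>
    ⟨isGE_transfer hvt (1 - m) (1 - m) (by lia) X (hTF.subT hX).1,
      (hv X).2 ⟨(hTF.subT hX).2, hTF.hom_zero X hX⟩⟩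
  have hF : F ⊆ win v 1 m := fun X hX => by
    refine ⟨?_, isLE_transfer htv 0 m (by lia) X (hTF.subF hX).2⟩
    rw [v.isGE_iff_orthogonal 0 1 rfl]
    intro Z f hZ
    exact ((hv Z).1 hZ).2 X hX f
  apply Set.Subset.antisymm
  · rintro A ⟨B, C, f, g, h, ⟨B₀, hB₀, ⟨e⟩⟩, hC, hT'⟩
    refine win_ext v _ _ hT' ?_ (hT hC)
    have : B ∈ shiftSet D (win v 1 m) m := ⟨B₀, hF hB₀, ⟨e⟩⟩
    rw [shiftSet_win] at this
    simpa using this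
  · rintro A ⟨hg, hl⟩
    obtain ⟨A', X, f, g, h, hA', hX, hT'⟩ :=
      exists_triangle_of_tiltAisle t m hm hTF ((hv A).1 hl)
    refine ⟨A', X, f, g, h, ⟨A'⟦-m⟧, ?_, ⟨((shiftEquiv D m).counitIso.app A').symm⟩⟩, hX, hT'⟩
    have hXg := (hT hX).1
    have hA'g : v.IsGE A' (1 - m) :=
      isGE_fibre v _ hT' hg (v.isGE_of_ge X _ (1 - m))
    have hBg : v.IsGE (A'⟦-m⟧) 1 := v.isGE_shift A' (1 - m) (-m) 1
    have hBH : A'⟦-m⟧ ∈ win t (1 - m) 0 :=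
      ⟨isGE_transfer htv (1 - m) 1 (by lia) _ hBg, t.isLE_shift A' (-m) (-m) 0⟩
    obtain ⟨T₀, F₀, a, b, c, hT₀, hF₀, hT''⟩ := hTF.cover _ hBH
    have := (hT hT₀).2
    obtain ⟨r, hr⟩ := retract_of_mor₁_eq_zero hT'' (v.zero a 0 1)
    exact hTF.summandF F₀ hF₀ _ b r hr hBH

lemma zero_mem_shiftSet (t : TStructure D) (a b m : ℤ) {T F : Set D}
    (hTF : IsSTorsionPairIn D (win t a b) T F) (Z : D) (hZ : IsZero Z) : Z ∈ shiftSet D F m :=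
  ⟨Z, hTF.zeroF Z hZ (win_zero t _ _ Z hZ),
    ⟨hZ.iso ((shiftFunctor D m).map_isZero hZ)⟩⟩

/-- The torsion class is recovered as `H ∩ φ(T, F)`. -/
lemma inter_star_eq (t : TStructure D) (m : ℤ) (hm : 1 ≤ m) {T F : Set D}
    (hTF : IsSTorsionPairIn D (win t (1 - m) 0) T F) :
    win t (1 - m) 0 ∩ starSet D (shiftSet D F m) T = T := by
  apply Set.Subset.antisymm
  · rintro X ⟨hX, B, C, f, g, h, ⟨B₀, hB₀, ⟨e⟩⟩, hC, hT⟩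
    have hB : B ∈ shiftSet D (win t (1 - m) 0) m := ⟨B₀, hTF.subF hB₀, ⟨e⟩⟩
    rw [shiftSet_win] at hB
    have := hB.2
    have := hX.1
    obtain ⟨r, hr⟩ := retract_of_mor₁_eq_zero hT (t.zero f (0 - m) (1 - m))
    exact hTF.summandT C hC X g r hr hX
  · intro X hX
    exact ⟨hTF.subT hX, 0, X, 0, 𝟙 X, 0, zero_mem_shiftSet t _ _ m hTF _ (isZero_zero D), hX,
      contractible_distinguished₁ X⟩

/-- The torsion-free class is recovered as `H ∩ φ(T, F)[-m]`. -/
lemma inter_shift_star_eq (t : TStructure D) (m : ℤ) (hm : 1 ≤ m) {T F : Set D}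
    (hTF : IsSTorsionPairIn D (win t (1 - m) 0) T F) :
    win t (1 - m) 0 ∩ shiftSet D (starSet D (shiftSet D F m) T) (-m) = F := by
  apply Set.Subset.antisymm
  · rintro X ⟨hX, A, ⟨B, C, f, g, h, ⟨B₀, hB₀, ⟨e⟩⟩, hC, hT⟩, ⟨e'⟩⟩
    -- Working with `A ≅ X[m]` instead of `X`: the map `A ⟶ C` vanishes, so `X[m]` is a summand
    -- of `B₀[m]`.
    have e₁ : A ≅ X⟦m⟧ :=
      ((shiftFunctor D m).mapIso e' ≪≫ (shiftEquiv D m).counitIso.app A).symm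
    have := hX.2
    have := (hTF.subT hC).1
    have : t.IsLE (X⟦m⟧) (-m) := t.isLE_shift X 0 m _
    have : t.IsLE A (-m) := t.isLE_of_iso e₁.symm _
    obtain ⟨i, hi⟩ := retract_of_mor₂_eq_zero hT (t.zero g (-m) (1 - m))
    obtain ⟨u, hu⟩ := (shiftFunctor D m).map_surjective (e₁.inv ≫ i ≫ e.hom)
    obtain ⟨w, hw⟩ := (shiftFunctor D m).map_surjective (e.inv ≫ f ≫ e₁.hom)
    refine hTF.summandF B₀ hB₀ X u w ?_ hX
    apply (shiftFunctor D m).map_injective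
    rw [Functor.map_comp, hu, hw]
    simp [reassoc_of% hi]
  · intro X hX
    refine ⟨hTF.subF hX, X⟦m⟧, ⟨X⟦m⟧, 0, 𝟙 _, 0, 0, ⟨X, hX, ⟨Iso.refl _⟩⟩, ?_,
      contractible_distinguished _⟩, ⟨(shiftEquiv D m).unitIso.app X⟩⟩
    exact hTF.zeroT _ (isZero_zero D) (win_zero t _ _ _ (isZero_zero D))

/-! ### From extended hearts to `s`-torsion pairs -/

/-- The inclusion `E ⊆ H[m] * H` bounds `E` with respect to `U`. -/
lemma bounds_of_le (t v : TStructure D) (m : ℤ) (hm : 1 ≤ m)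
    (hle : extHeartLE D m (win v (1 - m) 0) (win t (1 - m) 0)) :
    win v (1 - m) 0 ⊆ win t (1 - m - m) 0 := by
  intro A hA
  obtain ⟨P, Q, f, g, h, hP, hQ, hT⟩ := hle.1 hA
  rw [shiftSet_win] at hP
  have := hP.2
  have := hQ.1
  exact win_ext t _ _ hT ⟨hP.1, t.isLE_of_le P (0 - m) 0⟩
    ⟨t.isGE_of_ge Q _ (1 - m), hQ.2⟩

/-- The inclusion `H ⊆ E * E[-m]` bounds `H` with respect to `V`. -/
lemma bounds_of_le' (t v : TStructure D) (m : ℤ) (hm : 1 ≤ m)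
    (hle : extHeartLE D m (win v (1 - m) 0) (win t (1 - m) 0)) :
    win t (1 - m) 0 ⊆ win v (1 - m) m := by
  intro A hA
  obtain ⟨P, Q, f, g, h, hP, hQ, hT⟩ := hle.2 hA
  rw [shiftSet_win] at hQ
  have := hP.2
  have := hQ.1
  refine win_ext v _ _ hT ⟨hP.1, v.isLE_of_le P 0 m⟩
    ⟨v.isGE_of_ge Q _ (1 - m - -m), by simpa using hQ.2⟩

lemma isSTorsionPairIn_of_le (t v : TStructure D) (m : ℤ) (hm : 1 ≤ m)
    (hle : extHeartLE D m (win v (1 - m) 0) (win t (1 - m) 0)) :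
    IsSTorsionPairIn D (win t (1 - m) 0) (win t (1 - m) 0 ∩ win v (1 - m) 0)
      (win t (1 - m) 0 ∩ win v 1 m) where
  subT := Set.inter_subset_left
  subF := Set.inter_subset_left
  isoT A B e hA hB := ⟨hB, isoClosed_win v _ _ e hA.2⟩
  isoF A B e hA hB := ⟨hB, isoClosed_win v _ _ e hA.2⟩
  zeroT Z hZ hZ' := ⟨hZ', win_zero v _ _ Z hZ⟩
  zeroF Z hZ hZ' := ⟨hZ', win_zero v _ _ Z hZ⟩
  sumT A hA B hB := ⟨win_sum t _ _ hA.1 hB.1, win_sum v _ _ hA.2 hB.2⟩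
  sumF A hA B hB := ⟨win_sum t _ _ hA.1 hB.1, win_sum v _ _ hA.2 hB.2⟩
  summandT A hA X i p h hX := ⟨hX, win_summand v _ _ hA.2 i p h⟩
  summandF A hA X i p h hX := ⟨hX, win_summand v _ _ hA.2 i p h⟩
  hom_zero A hA B hB f := by
    have := hA.2.2
    have := hB.2.1
    exact v.zero f 0 1
  neg_hom_zero A hA B hB f := by
    have := hA.2.2
    have := hB.2.1
    have : v.IsGE (B⟦(-1 : ℤ)⟧) 2 := v.isGE_shift B 1 (-1) 2
    exact v.zero f 0 2
  cover X hX := by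
    obtain ⟨A, B, f, g, h, hA, hB, hT⟩ := hle.2 hX
    have hB' : B ∈ win t (1 - m) m := by
      have hB₁ : B ∈ shiftSet D (win t (1 - m - m) 0) (-m) := by
        obtain ⟨C, hC, e⟩ := hB
        exact ⟨C, bounds_of_le t v m hm hle hC, e⟩
      rw [shiftSet_win] at hB₁
      simpa using hB₁
    have hA' := bounds_of_le t v m hm hle hA
    rw [shiftSet_win] at hB
    have hBg := hB'.1
    have hAl := hA'.2
    refine ⟨A, B, f, g, h, ⟨⟨?_, hAl⟩, hA⟩, ⟨⟨hBg, ?_⟩, by simpa using hB⟩, hT⟩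
    · exact isGE_fibre t _ hT hX.1 (t.isGE_of_ge B _ (1 - m))
    · exact isLE_cone t 0 hT (t.isLE_of_le A 0 _) hX.2

/-- The heart is recovered as `φ(ψ(E))`. -/
lemma star_eq_of_le (t v : TStructure D) (m : ℤ) (hm : 1 ≤ m)
    (hle : extHeartLE D m (win v (1 - m) 0) (win t (1 - m) 0)) :
    starSet D (shiftSet D (win t (1 - m) 0 ∩ win v 1 m) m) (win t (1 - m) 0 ∩ win v (1 - m) 0) =
      win v (1 - m) 0 := by
  apply Set.Subset.antisymm
  · rintro A ⟨P, Q, f, g, h, ⟨P₀, hP₀, e⟩, hQ, hT⟩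
    have hP : P ∈ shiftSet D (win v 1 m) m := ⟨P₀, hP₀.2, e⟩
    rw [shiftSet_win] at hP
    exact win_ext v _ _ hT (by simpa using hP) hQ.2
  · intro A hA
    obtain ⟨P, Q, f, g, h, ⟨P₀, hP₀, ⟨e⟩⟩, hQ, hT⟩ := hle.1 hA
    have hP : P ∈ shiftSet D (win v (1 - m) m) m := ⟨P₀, bounds_of_le' t v m hm hle hP₀, ⟨e⟩⟩
    rw [shiftSet_win] at hP
    have hPl : v.IsLE P 0 := by simpa using hP.2
    have hQg := (bounds_of_le' t v m hm hle hQ).1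
    have hPg : v.IsGE P (1 - m) := isGE_fibre v _ hT hA.1 (v.isGE_of_ge Q _ (1 - m))
    have : v.IsGE (P₀⟦m⟧) (1 - m) := v.isGE_of_iso e _
    refine ⟨P, Q, f, g, h, ⟨P₀, ⟨hP₀, ?_, ?_⟩, ⟨e⟩⟩, ⟨hQ, hQg, ?_⟩, hT⟩
    · exact v.isGE_of_shift P₀ 1 m (1 - m)
    · exact (bounds_of_le' t v m hm hle hP₀).2
    · exact isLE_cone v 0 hT (v.isLE_of_le P 0 _) hA.2

lemma inter_subset_of_le (t v v' : TStructure D) (m : ℤ) (hm : 1 ≤ m)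
    (hle' : extHeartLE D m (win v' (1 - m) 0) (win t (1 - m) 0))
    (h : extHeartLE D m (win v (1 - m) 0) (win v' (1 - m) 0)) :
    win t (1 - m) 0 ∩ win v (1 - m) 0 ⊆ win t (1 - m) 0 ∩ win v' (1 - m) 0 := by
  rintro A ⟨hA, hA'⟩
  obtain ⟨P, Q, f, g, h, ⟨P₀, hP₀, e⟩, hQ, hT⟩ := h.1 hA'
  have hP : P ∈ shiftSet D (win t (1 - m - m) 0) m := ⟨P₀, bounds_of_le t v' m hm hle' hP₀, e⟩
  rw [shiftSet_win] at hP
  have := hP.2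
  have := hA.1
  obtain ⟨r, hr⟩ := retract_of_mor₁_eq_zero hT (t.zero f (0 - m) (1 - m))
  exact ⟨hA, win_summand v' _ _ hQ g r hr⟩

/-- Larger torsion classes have smaller torsion-free classes. -/
lemma torsionFree_antitone {H T F T' F' : Set D} (h : IsSTorsionPairIn D H T F)
    (h' : IsSTorsionPairIn D H T' F') (hTT' : T ⊆ T') : F' ⊆ F := by
  intro X hX
  obtain ⟨T₀, F₀, a, b, c, hT₀, hF₀, hT⟩ := h.cover X (h'.subF hX)
  obtain ⟨r, hr⟩ := retract_of_mor₁_eq_zero hT (h'.hom_zero T₀ (hTT' hT₀) X hX a)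
  exact h.summandF F₀ hF₀ X b r hr (h'.subF hX)

end

end ExtHeart

open ExtHeart in
/-- Theorem 4.8: `φ(𝒯,ℱ) = ℱ[m] * 𝒯` and
`ψ(ℰ) = (m-ℋ ∩ ℰ, m-ℋ ∩ ℰ[-m])` are mutually inverse, order preserving bijections
between the poset of `s`-torsion pairs in `m-ℋ` and the poset of `m`-extended hearts
`ℰ` on `D` with `ℰ ≤ m-ℋ`. -/
theorem stmt15 (L G : Set D) (hU : IsTStructure D L G) (m : ℤ) (hm : 1 ≤ m)
    (H : Set D) (hH : H = shiftSet D G (m - 1) ∩ L) :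
    -- φ is well defined and ψ ∘ φ = id
    (∀ T F, IsSTorsionPairIn D H T F →
       IsExtendedHeart D m (starSet D (shiftSet D F m) T) ∧
       extHeartLE D m (starSet D (shiftSet D F m) T) H ∧
       H ∩ starSet D (shiftSet D F m) T = T ∧
       H ∩ shiftSet D (starSet D (shiftSet D F m) T) (-m) = F) ∧
    -- ψ is well defined and φ ∘ ψ = id
    (∀ E, IsExtendedHeart D m E → extHeartLE D m E H →
       IsSTorsionPairIn D H (H ∩ E) (H ∩ shiftSet D E (-m)) ∧
       starSet D (shiftSet D (H ∩ shiftSet D E (-m)) m) (H ∩ E) = E) ∧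
    -- φ preserves the orders
    (∀ T F T' F', IsSTorsionPairIn D H T F → IsSTorsionPairIn D H T' F' → T ⊆ T' →
       extHeartLE D m (starSet D (shiftSet D F m) T) (starSet D (shiftSet D F' m) T')) ∧
    -- ψ preserves the orders
    (∀ E E', IsExtendedHeart D m E → IsExtendedHeart D m E' →
       extHeartLE D m E H → extHeartLE D m E' H → extHeartLE D m E E' →
       H ∩ E ⊆ H ∩ E') := by
  obtain ⟨t, ht⟩ := exists_win_eq hU
  obtain rfl : H = win t (1 - m) 0 := hH.trans (ht m)
  have heart : ∀ E, IsExtendedHeart D m E → ∃ v : Triangulated.TStructure D,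
      E = win v (1 - m) 0 := by
    rintro E ⟨L', G', h, rfl⟩
    obtain ⟨v, hv⟩ := exists_win_eq h
    exact ⟨v, hv m⟩
  refine ⟨?_, ?_, ?_, ?_⟩
  · intro T F hTF
    refine ⟨?_, ?_, inter_star_eq t m hm hTF, inter_shift_star_eq t m hm hTF⟩ <;>
      obtain ⟨v, hv, hE⟩ := exists_tilt t m hm hTF <;> rw [hE]
    · exact isExtendedHeart_win v m
    · exact extHeartLE_of_le v t m hm (fun A hA => ((hv A).1 hA).1)
        (fun A hA => (hv A).2 (mem_tiltAisle_of_isLE t m hm hTF hA))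
  · intro E hE hle
    obtain ⟨v, rfl⟩ := heart E hE
    have hs : shiftSet D (win v (1 - m) 0) (-m) = win v 1 m := by
      rw [shiftSet_win]
      congr 1 <;> lia
    rw [hs]
    exact ⟨isSTorsionPairIn_of_le t v m hm hle, star_eq_of_le t v m hm hle⟩
  · intro T F T' F' h h' hTT'
    obtain ⟨v, hv, hE⟩ := exists_tilt t m hm h
    obtain ⟨v', hv', hE'⟩ := exists_tilt t m hm h'
    rw [hE, hE']
    refine extHeartLE_of_le v v' m hm (fun A hA => ?_) (fun A hA => ?_)
    · rw [hv] at hA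
      exact (hv' A).2 ⟨hA.1, fun B hB => hA.2 B (torsionFree_antitone h h' hTT' hB)⟩
    · exact (hv A).2 (mem_tiltAisle_of_isLE t m hm h
        (isLE_transfer (fun B hB => ((hv' B).1 hB).1) (-m) (-m) (by lia) A hA))
  · intro E E' hE hE' hle hle' h
    obtain ⟨v, rfl⟩ := heart E hE
    obtain ⟨v', rfl⟩ := heart E' hE'
    exact inter_subset_of_le t v v' m hm hle' h
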